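/- arXiv:2602.22081 — 2 statements merged into one kernel-verified Lean document; each statement's English description precedes it below -/
import Mathlib

section
/- Let w ≥ 2 be an integer and let p_1 < p_2 < ... < p_n be primes such that 2w - 2 divides p_i - 1 for each i. Suppose that for each i = 1, ..., n there exists an equi-difference CAC of length p_i and weight w with (p_i - 1)/(2w - 2) codewords, and that the Legendre symbol conditions hold: (-1/p_i) = -1, and (j/p_i)·((j-w+1)/p_i) = -1 for every j = 1, 2, ..., w-2. Let r_1, ..., r_n be positive integers, P = p_1^{r_1}···p_n^{r_n}, and L = (w-1)P. Then the maximum number A of codewords of an AM-OPPTS MC-CAC of length L and weight w in 2 channels satisfies P + (P-1)/(w-1) - 1 ≤ A ≤ P + (P-1)/(w-1). -/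
/-- The set of nonzero differences of a subset `S ⊆ Z_L`. -/
def dstar {L : ℕ} (S : Finset (ZMod L)) : Finset (ZMod L) :=
  ((S ×ˢ S).image fun p => p.1 - p.2).erase 0

/-- A conflict-avoiding code of length `L` and weight `w`. -/
def IsCAC (L w : ℕ) (C : Finset (Finset (ZMod L))) : Prop :=
  (∀ S ∈ C, S.card = w) ∧
  ∀ S ∈ C, ∀ S' ∈ C, S ≠ S' → Disjoint (dstar S) (dstar S')

/-- A codeword is equi-difference if it is of the form `{0, g, 2g, …, (w-1)g}`. -/
def IsEquiDiff {L : ℕ} (w : ℕ) (S : Finset (ZMod L)) : Prop :=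
  ∃ g : ZMod L, S = (Finset.range w).image fun j : ℕ => (j : ZMod L) * g

/-- The set of time slots used by codeword `S` on channel `i`. -/
def chan {M L : ℕ} (S : Finset (Fin M × ZMod L)) (i : Fin M) : Finset (ZMod L) :=
  (S.filter fun p => p.1 = i).image Prod.snd

/-- The `(i,j)` set of differences of a codeword `S ⊆ {1,…,M} × Z_L`
(with `0` removed when `i = j`). -/
def Darr {M L : ℕ} (S : Finset (Fin M × ZMod L)) (i j : Fin M) : Finset (ZMod L) :=
  if i = j then (((chan S i) ×ˢ (chan S j)).image fun p => p.1 - p.2).erase 0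
  else ((chan S i) ×ˢ (chan S j)).image fun p => p.1 - p.2

/-- A multichannel conflict-avoiding code of length `L` and weight `w` in `M` channels. -/
def IsMCCAC (M L w : ℕ) (C : Finset (Finset (Fin M × ZMod L))) : Prop :=
  (∀ S ∈ C, S.card = w) ∧
  ∀ S ∈ C, ∀ S' ∈ C, S ≠ S' → ∀ i j : Fin M, Disjoint (Darr S i j) (Darr S' i j)

/-- An MC-CAC with the at most one-packet per time slot (AM-OPPTS) property. -/
def IsAMOPPTSMCCAC (M L w : ℕ) (C : Finset (Finset (Fin M × ZMod L))) : Prop :=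
  IsMCCAC M L w C ∧
  ∀ S ∈ C, ∀ t : ZMod L, ∀ i j : Fin M, (i, t) ∈ S → (j, t) ∈ S → i = j

/-!
Write `m = w - 1`, so that `L = mP` and every prime divisor of `P` exceeds `2m`.

Upper bound. A codeword using both channels has at least `m` differences from channel `1` to
channel `0`, so there are fewer than `P` such codewords. Let `K` be the kernel of `Z_L → Z_P`, a
subgroup of order `m`. The differences within the channels, those in `K` being counted twice, number
at least `2m` for a codeword on one channel and at least `2m - 2` for one on both. Adding up over
the code, `2m|C| ≤ 2(mP - 1) + 2(m - 1) + 2(P - 1)`. Both estimates come from iterating Dyson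
transforms on a pair `(A, B)` until `B - B` consists of periods of `A`.

Lower bound. By the Chinese remainder theorem `Z_L` is `Z_m × Z_P`. The words on one channel have
generators `(0, γ)` with `γ` in a set `Γ` such that every nonzero element of `Z_P` is `kγ` for
exactly one `γ ∈ Γ` and one `k` with `0 < |k| ≤ m`. The words on both channels send their first
packet on one channel and the rest on the other, and have generators `(1, x)`; two of them collide
only if `kx = k'x'` with `k ≡ k' mod m`. For `P` prime, `Γ` consists of the generators of the given
equi-difference code, and `x` runs over the quadratic residues: the Legendre symbol conditions say
that `k` and `k'` then have opposite quadratic characters. Both sets extend from the kernel and the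
quotient of an extension of abelian groups to the whole group, hence from primes to `P`.
-/

section Sumset

open AddAction
open scoped Pointwise Finset

variable {G : Type*} [AddCommGroup G] [DecidableEq G]

theorem finite_stabilizer_finset {A : Finset G} (hA : A.Nonempty) :
    (stabilizer G A : Set G).Finite := by
  rw [← stabilizer_coe_finset]
  exact stabilizer_finite hA A.finite_toSet

theorem card_stabilizer_dvd_card (A : Finset G) : Nat.card (stabilizer G A) ∣ #A := by
  have hperiodic : (A : Set G) + (stabilizer G A : Set G) = A := by
    rw [← stabilizer_coe_finset, add_comm, stabilizer_add_self]
  have hcosets :=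
    AddSubgroup.card_add_eq_card_addSubgroup_add_card_quotient (stabilizer G A) (A : Set G)
  rw [hperiodic, Nat.card_coe_set_eq, Set.ncard_coe_finset] at hcosets
  exact ⟨_, hcosets⟩

theorem card_le_card_stabilizer {A B : Finset G} (hA : A.Nonempty)
    (hB : ∀ b ∈ B, ∀ b' ∈ B, b' - b ∈ stabilizer G A) : #B ≤ Nat.card (stabilizer G A) := by
  obtain rfl | ⟨b, hb⟩ := B.eq_empty_or_nonempty
  · simp
  calc #B = #(B.image (· - b)) := (Finset.card_image_of_injective B sub_left_injective).symm
    _ ≤ (stabilizer G A : Set G).ncard := by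
        rw [← Set.ncard_coe_finset]
        refine Set.ncard_le_ncard ?_ (finite_stabilizer_finset hA)
        simpa [Set.subset_def] using hB b hb

/-- Iterating Dyson transforms `(A, B) ↦ (A ∪ (e + B), B ∩ (A - e))` shrinks `B` until all its
differences are periods of `A`. -/
theorem exists_dyson_stable_pair (A B : Finset G) (hA : A.Nonempty) (hB : B.Nonempty) :
    ∃ A' B' : Finset G, A'.Nonempty ∧ B'.Nonempty ∧ B' ⊆ B ∧ A' + B' ⊆ A + B ∧
      #A' + #B' = #A + #B ∧ ∀ b ∈ B', ∀ b' ∈ B', b' - b ∈ stabilizer G A' := by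
  induction B using Finset.strongInduction generalizing A with
  | H B ih =>
  by_cases hstable : ∀ b ∈ B, ∀ b' ∈ B, b' - b ∈ stabilizer G A
  · exact ⟨A, B, hA, hB, subset_rfl, subset_rfl, rfl, hstable⟩
  obtain ⟨b, hb, b', hb', a, ha, hab⟩ :
      ∃ b ∈ B, ∃ b' ∈ B, ∃ a ∈ A, (b' - b) + a ∉ A := by
    simpa [mem_stabilizer_finset', -mem_stabilizer_iff] using hstable
  set T := Finset.addDysonETransform (a - b) (A, B)
  have hT : ∀ c ∈ B, c ∈ T.2 ↔ (a - b) + c ∈ A := fun c hc => by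
    rw [Finset.addDysonETransform_snd, Finset.mem_inter, Finset.mem_neg_vadd_finset_iff]
    exact and_iff_right hc
  have hbT : b ∈ T.2 := (hT b hb).2 (by rwa [sub_add_cancel])
  have hb'T : b' ∉ T.2 := fun h => hab (by
    convert (hT b' hb').1 h using 1
    abel)
  have hTB : T.2 ⊂ B :=
    Finset.ssubset_iff_subset_ne.2 ⟨Finset.inter_subset_left, fun h => hb'T (h ▸ hb')⟩
  obtain ⟨A', B', hA', hB', hB'T, hsum, hcard, hstable'⟩ :=
    ih T.2 hTB T.1 ⟨a, Finset.mem_union_left _ ha⟩ ⟨b, hbT⟩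
  exact ⟨A', B', hA', hB', hB'T.trans hTB.subset,
    hsum.trans (Finset.addDysonETransform.subset _ (A, B)),
    hcard.trans (Finset.addDysonETransform.card _ (A, B)), hstable'⟩

theorem le_card_add_of_forall_card_dvd_or_le {m : ℕ}
    (hG : ∀ H : AddSubgroup G, Nat.card H ∣ m ∨ m ≤ Nat.card H) {A B : Finset G}
    (hA : A.Nonempty) (hB : B.Nonempty) (hAB : m < #A + #B) : m ≤ #(A + B) := by
  obtain ⟨A', B', hA', hB', -, hsum, hcard, hstable⟩ := exists_dyson_stable_pair A B hA hB
  have hA'le : #A' ≤ #(A + B) :=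
    (Finset.card_le_card_add_right hB').trans (Finset.card_le_card hsum)
  refine le_trans ?_ hA'le
  have hB'le := card_le_card_stabilizer hA' hstable
  have hdvd := card_stabilizer_dvd_card A'
  obtain h | h := hG (stabilizer G A')
  · have hlt : m < #A' + Nat.card (stabilizer G A') := by omega
    exact Nat.le_of_lt_add_of_dvd hlt h hdvd
  · exact h.trans (Nat.le_of_dvd hA'.card_pos hdvd)

/-- Let `A'`, `B'` be the stable pair obtained from `A`, `-A`. If the periods of `A'` lie in `φ.ker`
then so does `B' - B'`, which thus makes up for the loss of `#B'`; otherwise there are so many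
periods that `A'` alone is large enough. -/
theorem two_mul_card_le_card_sub_add_card_filter {Q : Type*} [AddCommGroup Q] [DecidableEq Q]
    (φ : G →+ Q) {A : Finset G} (hA : A.Nonempty)
    (hQ : ((2 * #A - 1 : ℕ) : ℕ∞) ≤ AddMonoid.minOrder Q) :
    2 * #A ≤ #(A - A) + #{x ∈ A - A | φ x = 0} := by
  obtain ⟨A', B', hA', ⟨b, hb⟩, hB'A, hsum, hcard, hstable⟩ :=
    exists_dyson_stable_pair A (-A) hA hA.neg
  rw [Finset.card_neg, ← two_mul] at hcard
  have hA'le : #A' ≤ #(A - A) := by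
    rw [sub_eq_add_neg]
    exact (Finset.card_le_card_add_right ⟨b, hb⟩).trans (Finset.card_le_card hsum)
  by_cases hker : stabilizer G A' ≤ φ.ker
  · have hB'le : #B' ≤ #{x ∈ A - A | φ x = 0} := by
      refine Finset.card_le_card_of_injOn (· - b) (fun b' hb' => ?_) sub_left_injective.injOn
      have hneg : ∀ c ∈ B', -c ∈ A := fun c hc => Finset.mem_neg'.1 (hB'A hc)
      have hmem : b' - b ∈ A - A :=
        Finset.mem_sub.2 ⟨-b, hneg b hb, -b', hneg b' hb', by abel⟩
      exact Finset.mem_coe.2 (Finset.mem_filter.2 ⟨hmem, hker (hstable b hb b' hb')⟩)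
    omega
  · have hfin := finite_stabilizer_finset hA'
    have hne : (stabilizer G A').map φ ≠ ⊥ := by
      rwa [Ne, AddSubgroup.map_eq_bot_iff]
    have hperiods : 2 * #A - 1 ≤ Nat.card (stabilizer G A') := by
      have himage := hQ.trans (AddMonoid.minOrder_le_natCard hne (hfin.image φ))
      exact (Nat.cast_le.1 himage).trans (Nat.card_image_le hfin)
    have hzero : 0 < #{x ∈ A - A | φ x = 0} := by
      obtain ⟨a, ha⟩ := hA
      exact Finset.card_pos.2 ⟨0, by simpa using Finset.mem_sub.2 ⟨a, ha, a, ha, sub_self a⟩⟩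
    have := Nat.le_of_dvd hA'.card_pos (card_stabilizer_dvd_card A')
    omega

end Sumset

section Channels

open scoped Pointwise Finset

variable {M L : ℕ}

theorem mem_chan {S : Finset (Fin M × ZMod L)} {i : Fin M} {t : ZMod L} :
    t ∈ chan S i ↔ (i, t) ∈ S := by
  simp [chan]

theorem sum_card_chan (S : Finset (Fin M × ZMod L)) : ∑ i, #(chan S i) = #S := by
  rw [Finset.card_eq_sum_card_fiberwise (f := Prod.fst) (t := Finset.univ) (by simp)]
  refine Finset.sum_congr rfl fun i _ => Finset.card_image_of_injOn fun p hp q hq hpq => ?_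
  exact Prod.ext ((Finset.mem_filter.1 hp).2.trans (Finset.mem_filter.1 hq).2.symm) hpq

theorem Darr_self (S : Finset (Fin M × ZMod L)) (i : Fin M) :
    Darr S i i = (chan S i - chan S i).erase 0 :=
  if_pos rfl

theorem Darr_of_ne (S : Finset (Fin M × ZMod L)) {i j : Fin M} (hij : i ≠ j) :
    Darr S i j = chan S i - chan S j :=
  if_neg hij

theorem exists_sub_eq_of_mem_Darr {S : Finset (Fin M × ZMod L)} {i j : Fin M} {t : ZMod L}
    (ht : t ∈ Darr S i j) :
    ∃ a b, (i, a) ∈ S ∧ (j, b) ∈ S ∧ a - b = t ∧ (i = j → t ≠ 0) := by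
  obtain rfl | hij := eq_or_ne i j
  · simp only [Darr_self, Finset.mem_erase, Finset.mem_sub, mem_chan] at ht
    obtain ⟨ht0, a, ha, b, hb, hab⟩ := ht
    exact ⟨a, b, ha, hb, hab, fun _ => ht0⟩
  · simp only [Darr_of_ne S hij, Finset.mem_sub, mem_chan] at ht
    obtain ⟨a, ha, b, hb, hab⟩ := ht
    exact ⟨a, b, ha, hb, hab, fun h => absurd h hij⟩

theorem sub_mem_Darr {S : Finset (Fin M × ZMod L)} {i j : Fin M} {a b : ZMod L}
    (ha : (i, a) ∈ S) (hb : (j, b) ∈ S) (hab : a ≠ b) : a - b ∈ Darr S i j := by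
  have hmem := Finset.sub_mem_sub (mem_chan.2 ha) (mem_chan.2 hb)
  obtain rfl | hij := eq_or_ne i j
  · rw [Darr_self]
    exact Finset.mem_erase.2 ⟨sub_ne_zero.2 hab, hmem⟩
  · rwa [Darr_of_ne S hij]

theorem zero_notMem_Darr {S : Finset (Fin M × ZMod L)}
    (hS : ∀ t i j, (i, t) ∈ S → (j, t) ∈ S → i = j) (i j : Fin M) : 0 ∉ Darr S i j := by
  intro h
  obtain ⟨a, b, ha, hb, hab, hne⟩ := exists_sub_eq_of_mem_Darr h
  obtain rfl := sub_eq_zero.1 hab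
  exact hne (hS a i j ha hb) rfl

theorem two_mul_card_chan_le {Q : Type*} [AddCommGroup Q] [DecidableEq Q] (φ : ZMod L →+ Q)
    (S : Finset (Fin M × ZMod L)) (i : Fin M) (hS : (chan S i).Nonempty)
    (hQ : ((2 * #(chan S i) - 1 : ℕ) : ℕ∞) ≤ AddMonoid.minOrder Q) :
    2 * #(chan S i) ≤ #(Darr S i i) + #{t ∈ Darr S i i | φ t = 0} + 2 := by
  have hzero : 0 ∈ chan S i - chan S i := by
    obtain ⟨a, ha⟩ := hS
    exact Finset.mem_sub.2 ⟨a, ha, a, ha, sub_self a⟩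
  have hker : 0 ∈ {t ∈ chan S i - chan S i | φ t = 0} :=
    Finset.mem_filter.2 ⟨hzero, map_zero φ⟩
  have hdiff := two_mul_card_le_card_sub_add_card_filter φ hS hQ
  rw [← Finset.card_erase_add_one hzero, ← Finset.card_erase_add_one hker,
    ← Finset.filter_erase, ← Darr_self] at hdiff
  omega

theorem two_mul_le_sum_card_Darr {Q : Type*} [AddCommGroup Q] [DecidableEq Q] (φ : ZMod L →+ Q)
    {m : ℕ} (hQ : ((2 * m + 1 : ℕ) : ℕ∞) ≤ AddMonoid.minOrder Q) {S : Finset (Fin 2 × ZMod L)}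
    (hS : #S = m + 1) :
    2 * m ≤ ∑ i, (#(Darr S i i) + #{t ∈ Darr S i i | φ t = 0}) +
      if ∀ i, (chan S i).Nonempty then 2 else 0 := by
  have hweight : #(chan S 0) + #(chan S 1) = m + 1 := by
    rw [← hS, ← sum_card_chan, Fin.sum_univ_two]
  have hbound : ∀ i, (chan S i).Nonempty →
      2 * #(chan S i) ≤ #(Darr S i i) + #{t ∈ Darr S i i | φ t = 0} + 2 := fun i hi => by
    refine two_mul_card_chan_le φ S i hi (le_trans (Nat.cast_le.2 ?_) hQ)
    have : #(chan S i) ≤ m + 1 := by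
      rw [← hS, ← sum_card_chan]
      exact Finset.single_le_sum (f := fun i => #(chan S i)) (by simp) (Finset.mem_univ i)
    omega
  have hbound₀ := hbound 0
  have hbound₁ := hbound 1
  simp only [Fin.sum_univ_two, Fin.forall_fin_two, ← Finset.card_pos] at hbound₀ hbound₁ ⊢
  split_ifs <;> omega

end Channels

section UpperBound

open scoped Pointwise Finset

variable {M L w : ℕ} [NeZero L]

theorem sum_card_filter_Darr_lt {C : Finset (Finset (Fin M × ZMod L))}
    (hC : IsAMOPPTSMCCAC M L w C) (i j : Fin M) (p : ZMod L → Prop) [DecidablePred p]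
    (hp : p 0) : ∑ S ∈ C, #{t ∈ Darr S i j | p t} < #{t | p t} := by
  obtain ⟨⟨-, hdisjoint⟩, hslot⟩ := hC
  have hpairwise : (C : Set (Finset (Fin M × ZMod L))).PairwiseDisjoint
      fun S => {t ∈ Darr S i j | p t} := fun S hS S' hS' hne =>
    Finset.disjoint_filter_filter (hdisjoint S hS S' hS' hne i j)
  rw [← Finset.card_biUnion hpairwise]
  refine Finset.card_lt_card (Finset.ssubset_iff_of_subset ?_ |>.2 ⟨0, by simpa, ?_⟩)
  · exact Finset.biUnion_subset.2 fun S _ => Finset.filter_subset_filter p (Finset.subset_univ _)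
  · simp only [Finset.mem_biUnion, Finset.mem_filter, not_exists, not_and]
    exact fun S hS h => absurd h (zero_notMem_Darr (hslot S hS) i j)

theorem sum_card_Darr_lt {C : Finset (Finset (Fin M × ZMod L))}
    (hC : IsAMOPPTSMCCAC M L w C) (i j : Fin M) : ∑ S ∈ C, #(Darr S i j) < L := by
  simpa [ZMod.card] using sum_card_filter_Darr_lt hC i j (fun _ => True) trivial

theorem card_filter_nonempty_chan_mul_lt {m : ℕ}
    (hL : ∀ H : AddSubgroup (ZMod L), Nat.card H ∣ m ∨ m ≤ Nat.card H)
    {C : Finset (Finset (Fin 2 × ZMod L))} (hC : IsAMOPPTSMCCAC 2 L (m + 1) C) :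
    #{S ∈ C | ∀ i, (chan S i).Nonempty} * m < L := by
  refine lt_of_le_of_lt ?_ (sum_card_Darr_lt hC 0 1)
  refine le_trans ?_ (Finset.sum_le_sum_of_subset
    (Finset.filter_subset (fun S => ∀ i, (chan S i).Nonempty) C))
  refine Finset.card_nsmul_le_sum _ _ m fun S hS => ?_
  obtain ⟨hSC, hne⟩ := Finset.mem_filter.1 hS
  have hweight := (sum_card_chan S).trans (hC.1.1 S hSC)
  rw [Fin.sum_univ_two] at hweight
  rw [Darr_of_ne S zero_ne_one, sub_eq_add_neg]
  refine le_card_add_of_forall_card_dvd_or_le hL (hne 0) (hne 1).neg ?_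
  rw [Finset.card_neg]
  omega

variable {m P : ℕ}

theorem card_addSubgroup_dvd_or_le [NeZero (m * P)] (hP : ∀ q, q.Prime → q ∣ P → m ≤ q)
    (H : AddSubgroup (ZMod (m * P))) : Nat.card H ∣ m ∨ m ≤ Nat.card H := by
  have hdvd : Nat.card H ∣ m * P := by
    simpa [Nat.card_zmod] using AddSubgroup.card_addSubgroup_dvd_card H
  by_cases hcoprime : (Nat.card H).Coprime P
  · exact .inl (hcoprime.dvd_of_dvd_mul_right hdvd)
  · obtain ⟨q, hq, hqH, hqP⟩ := Nat.Prime.not_coprime_iff_dvd.1 hcoprime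
    exact .inr ((hP q hq hqP).trans (Nat.le_of_dvd Nat.card_pos hqH))

theorem le_minOrder_zmod [NeZero P] {c : ℕ} (hP : ∀ q, q.Prime → q ∣ P → c ≤ q) :
    (c : ℕ∞) ≤ AddMonoid.minOrder (ZMod P) := by
  obtain rfl | hP1 := eq_or_ne P 1
  · rw [AddMonoid.le_minOrder]
    exact fun _ ha => absurd (Subsingleton.elim _ _) ha
  · rw [ZMod.minOrder (NeZero.ne P) hP1]
    exact Nat.cast_le.2 (hP _ (Nat.minFac_prime hP1) (Nat.minFac_dvd P))

theorem card_filter_castHom_eq_zero [NeZero (m * P)] :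
    #{t : ZMod (m * P) | ZMod.castHom (Dvd.intro_left m rfl) (ZMod P) t = 0} = m := by
  have hP : 0 < P := Nat.pos_of_ne_zero (right_ne_zero_of_mul (NeZero.ne (m * P)))
  let φ := (ZMod.castHom (Dvd.intro_left m rfl) (ZMod P) : ZMod (m * P) →+ ZMod P)
  have hsurj : φ.range = ⊤ := AddMonoidHom.range_eq_top.2 (ZMod.ringHom_surjective _)
  have hlagrange := φ.ker.card_mul_index
  rw [AddSubgroup.index_ker, hsurj, AddSubgroup.card_top, Nat.card_zmod, Nat.card_zmod]
    at hlagrange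
  refine Eq.trans ?_ (Nat.eq_of_mul_eq_mul_right hP hlagrange)
  rw [← Nat.card_eq_finsetCard]
  exact Nat.card_congr (Equiv.subtypeEquivRight fun t => Finset.mem_filter_univ t)

theorem card_le_of_isAMOPPTSMCCAC [NeZero (m * P)] (hdvd : m ∣ P - 1)
    (hP : ∀ q, q.Prime → q ∣ P → 2 * m < q) {C : Finset (Finset (Fin 2 × ZMod (m * P)))}
    (hC : IsAMOPPTSMCCAC 2 (m * P) (m + 1) C) : #C ≤ P + (P - 1) / m := by
  have hm : 0 < m := Nat.pos_of_ne_zero (left_ne_zero_of_mul (NeZero.ne (m * P)))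
  have : NeZero P := ⟨right_ne_zero_of_mul (NeZero.ne (m * P))⟩
  have hmixed : #{S ∈ C | ∀ i, (chan S i).Nonempty} < P := by
    have := card_filter_nonempty_chan_mul_lt
      (card_addSubgroup_dvd_or_le fun q hq hqP => by have := hP q hq hqP; omega) hC
    exact lt_of_mul_lt_mul_right' (this.trans_eq (mul_comm m P))
  let φ := (ZMod.castHom (Dvd.intro_left m rfl) (ZMod P) : ZMod (m * P) →+ ZMod P)
  have hdiff : ∀ i, ∑ S ∈ C, #(Darr S i i) < m * P := fun i => sum_card_Darr_lt hC i i
  have hker : ∀ i, ∑ S ∈ C, #{t ∈ Darr S i i | φ t = 0} < m := fun i =>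
    (sum_card_filter_Darr_lt hC i i _ (map_zero φ)).trans_eq card_filter_castHom_eq_zero
  have hsum := Finset.sum_le_sum fun S hS =>
    two_mul_le_sum_card_Darr φ (le_minOrder_zmod hP) (hC.1.1 S hS)
  rw [Finset.sum_const, Finset.sum_add_distrib, ← Finset.sum_filter, Finset.sum_const,
    Finset.sum_comm, Fin.sum_univ_two, Finset.sum_add_distrib, Finset.sum_add_distrib,
    smul_eq_mul, smul_eq_mul] at hsum
  have h00 := hdiff 0
  have h11 := hdiff 1
  have hker₀ := hker 0
  have hker₁ := hker 1
  obtain ⟨q, hq⟩ := hdvd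
  rw [hq, Nat.mul_div_cancel_left q hm]
  have hP' : P = m * q + 1 := by have := NeZero.pos P; omega
  refine Nat.le_of_lt_succ (lt_of_mul_lt_mul_right' (a := m) ?_)
  nlinarith

end UpperBound

section Splitting

open scoped Finset

/-- The nonzero integers of absolute value at most `c`: the coefficients `a - b` with which the
generator of a progression of `c + 1` terms occurs in its differences. -/
noncomputable def multipliers (c : ℕ) : Finset ℤ :=
  (Finset.Icc (-c : ℤ) c).erase 0

theorem mem_multipliers {c : ℕ} {k : ℤ} : k ∈ multipliers c ↔ k ≠ 0 ∧ |k| ≤ c := by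
  rw [multipliers, Finset.mem_erase, Finset.mem_Icc, abs_le]

theorem card_multipliers (c : ℕ) : #(multipliers c) = 2 * c := by
  rw [multipliers, Finset.card_erase_of_mem (by simp), Int.card_Icc]
  omega

theorem multipliers_mono {c m : ℕ} (h : c ≤ m) : multipliers c ⊆ multipliers m := fun k hk => by
  rw [mem_multipliers] at hk ⊢
  exact ⟨hk.1, hk.2.trans (Nat.cast_le.2 h)⟩

theorem natCast_sub_mem_multipliers {m a b : ℕ} (ha : a ≤ m) (hb : b ≤ m) (hab : a ≠ b) :
    (a : ℤ) - b ∈ multipliers m := by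
  rw [mem_multipliers, abs_le]
  omega

theorem not_dvd_of_mem_multipliers {m q : ℕ} (hq : m < q) {k : ℤ} (hk : k ∈ multipliers m) :
    ¬(q : ℤ) ∣ k := by
  rw [mem_multipliers] at hk
  exact fun h => hk.1 (Int.eq_zero_of_abs_lt_dvd h (hk.2.trans_lt (Nat.cast_lt.2 hq)))

theorem zsmul_bijective_of_mem_multipliers {G : Type*} [AddCommGroup G] [Finite G] {m : ℕ}
    (hG : ∀ q, q.Prime → q ∣ Nat.card G → m < q) {k : ℤ} (hk : k ∈ multipliers m) :
    Function.Bijective fun x : G => k • x := by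
  have hcoprime : (Nat.card G).Coprime k.natAbs := Nat.coprime_of_dvd fun q hq hqG hqk =>
    not_dvd_of_mem_multipliers (hG q hq hqG) hk (Int.natCast_dvd.2 hqk)
  refine Finite.injective_iff_bijective.1
    ((injective_iff_map_eq_zero (zsmulAddGroupHom k : G →+ G)).2 fun x hx => ?_)
  rw [← AddMonoid.addOrderOf_eq_one_iff]
  refine Nat.eq_one_of_dvd_coprimes hcoprime (addOrderOf_dvd_natCard x) ?_
  rw [addOrderOf_dvd_iff_nsmul_eq_zero]
  exact natAbs_nsmul_eq_zero.2 hx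

/-- Every nonzero element of `G` is a multiple of an element of `S` by one of `multipliers c`, while
no two multiples of elements of `S` by distinct `k, k' ∈ multipliers m` with `k ≡ k' [ZMOD d]`
coincide. For `d = 1`, `c = m` this is the classical notion that `multipliers m` splits `G` with
splitting set `S`; for `d = m`, `c = 1` it is the property of the quadratic residues behind the
words that use two channels. -/
structure IsSplitting {G : Type*} [AddCommGroup G] (m d c : ℕ) (S : Set G) : Prop where
  zero_notMem : 0 ∉ S
  eq_of_smul_eq : ∀ k ∈ multipliers m, ∀ k' ∈ multipliers m, k ≡ k' [ZMOD d] →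
    ∀ x ∈ S, ∀ x' ∈ S, k • x = k' • x' → k = k'
  exists_smul_eq : ∀ x ≠ 0, ∃ k ∈ multipliers c, ∃ y ∈ S, k • y = x

namespace IsSplitting

variable {m d c : ℕ} {G N Q : Type*} [AddCommGroup G] [AddCommGroup N] [AddCommGroup Q]

theorem empty [Subsingleton G] : IsSplitting m d c (∅ : Set G) where
  zero_notMem := Set.notMem_empty 0
  eq_of_smul_eq := by simp
  exists_smul_eq x hx := absurd (Subsingleton.elim x 0) hx

theorem natCard_sub_one_le [Finite G] {S : Finset G} (hS : IsSplitting m d c (S : Set G)) :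
    Nat.card G - 1 ≤ 2 * c * #S := by
  classical
  have := Fintype.ofFinite G
  have hcover : Finset.univ.erase 0 ⊆ (multipliers c ×ˢ S).image fun q => q.1 • q.2 := by
    intro x hx
    obtain ⟨k, hk, y, hy, rfl⟩ := hS.exists_smul_eq x (Finset.ne_of_mem_erase hx)
    exact Finset.mem_image_of_mem (fun q : ℤ × G => q.1 • q.2) (Finset.mk_mem_product hk hy)
  calc Nat.card G - 1 = #(Finset.univ.erase (0 : G)) := by
        rw [Finset.card_erase_of_mem (Finset.mem_univ _), Finset.card_univ,
          Nat.card_eq_fintype_card]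
    _ ≤ #(multipliers c ×ˢ S) := (Finset.card_le_card hcover).trans Finset.card_image_le
    _ = 2 * c * #S := by rw [Finset.card_product, card_multipliers]

theorem of_exact {ψ : N →+ G} {φ : G →+ Q} (hψ : Function.Injective ψ) (hexact : Function.Exact ψ φ)
    (hcm : c ≤ m) (hG : ∀ k ∈ multipliers m, Function.Surjective fun x : G => k • x)
    (hQ : ∀ k ∈ multipliers m, Function.Injective fun x : Q => k • x)
    {T : Set N} (hT : IsSplitting m d c T) {U : Set Q} (hU : IsSplitting m d c U) :
    IsSplitting m d c (ψ '' T ∪ φ ⁻¹' U) where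
  zero_notMem := by
    rintro (⟨n, hn, hn0⟩ | h)
    · obtain rfl := (map_eq_zero_iff ψ hψ).1 hn0
      exact hT.zero_notMem hn
    · exact hU.zero_notMem (map_zero φ ▸ h)
  eq_of_smul_eq := by
    have hdisjoint : ∀ (k : ℤ), ∀ k' ∈ multipliers m, ∀ n x, φ x ∈ U → k • ψ n ≠ k' • x := by
      intro k k' hk' n x hx h
      have hφ : k' • φ x = k' • 0 := by
        rw [← map_zsmul, ← h, map_zsmul, hexact.apply_apply_eq_zero, smul_zero, smul_zero]
      exact hU.zero_notMem (hQ k' hk' hφ ▸ hx)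
    rintro k hk k' hk' hkk' x (⟨n, hn, rfl⟩ | hx) x' (⟨n', hn', rfl⟩ | hx') h
    · exact hT.eq_of_smul_eq k hk k' hk' hkk' n hn n' hn' (hψ (by simpa only [map_zsmul] using h))
    · exact absurd h (hdisjoint k k' hk' n x' hx')
    · exact absurd h.symm (hdisjoint k' k hk n' x hx)
    · refine hU.eq_of_smul_eq k hk k' hk' hkk' _ hx _ hx' ?_
      rw [← map_zsmul, h, map_zsmul]
  exists_smul_eq x hx := by
    by_cases hφx : φ x = 0
    · obtain ⟨n, rfl⟩ := (hexact x).1 hφx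
      obtain ⟨k, hk, y, hy, rfl⟩ := hT.exists_smul_eq n (by rintro rfl; exact hx (map_zero ψ))
      exact ⟨k, hk, ψ y, .inl ⟨y, hy, rfl⟩, (map_zsmul ψ k y).symm⟩
    · obtain ⟨k, hk, u, hu, hku⟩ := hU.exists_smul_eq (φ x) hφx
      obtain ⟨y, rfl⟩ := hG k (multipliers_mono hcm hk) x
      have hyu : φ y = u := hQ k (multipliers_mono hcm hk) ((map_zsmul φ k y).symm.trans hku.symm)
      exact ⟨k, hk, y, .inr (Set.mem_preimage.2 (hyu ▸ hu)), rfl⟩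

theorem exists_of_forall_prime [Finite G] (hcm : c ≤ m)
    (hG : ∀ q, q.Prime → q ∣ Nat.card G → m < q ∧ ∃ S : Set (ZMod q), IsSplitting m d c S) :
    ∃ S : Set G, IsSplitting m d c S := by
  induction hn : Nat.card G using Nat.strong_induction_on generalizing G with
  | _ n ih =>
  subst hn
  cases subsingleton_or_nontrivial G
  · exact ⟨∅, empty⟩
  obtain ⟨q, hq, hqG⟩ := Nat.exists_prime_and_dvd (Finite.one_lt_card (α := G)).ne'
  have := Fact.mk hq
  obtain ⟨x, hx⟩ := exists_prime_addOrderOf_dvd_card' q hqG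
  set N := AddSubgroup.zmultiples x
  have hN : Nat.card N = q := (Nat.card_zmultiples x).trans hx
  have hlagrange := N.card_eq_card_quotient_mul_card_addSubgroup
  obtain ⟨-, T, hT⟩ := hG (Nat.card N) (hN ▸ hq) (hN ▸ hqG)
  have hquot : ∀ q', q' ∣ Nat.card (G ⧸ N) → q' ∣ Nat.card G := fun q' h =>
    hlagrange ▸ h.mul_right _
  have hprime : ∀ q', q'.Prime → q' ∣ Nat.card G → m < q' := fun q' hq' h => (hG q' hq' h).1
  obtain ⟨U, hU⟩ := ih (Nat.card (G ⧸ N))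
    (hlagrange ▸ lt_mul_of_one_lt_right Nat.card_pos (hN ▸ hq.one_lt))
    (fun q' hq' h => hG q' hq' (hquot q' h)) rfl
  let e : ZMod (Nat.card N) ≃+ N := zmodAddCyclicAddEquiv inferInstance
  refine ⟨_, of_exact (ψ := N.subtype.comp e.toAddMonoidHom) (φ := QuotientAddGroup.mk' N)
    (N.subtype_injective.comp e.injective) (fun y => ?_) hcm
    (fun k hk => (zsmul_bijective_of_mem_multipliers hprime hk).surjective)
    (fun k hk => (zsmul_bijective_of_mem_multipliers
      (fun q' hq' h => hprime q' hq' (hquot q' h)) hk).injective) hT hU⟩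
  simp

end IsSplitting

end Splitting

section Prime

open scoped Finset

theorem zsmul_mem_dstar_image_range {L m : ℕ} {g : ZMod L} {k : ℤ} (hk : k ∈ multipliers m)
    (hkg : k • g ≠ 0) :
    k • g ∈ dstar ((Finset.range (m + 1)).image fun j : ℕ => (j : ZMod L) * g) := by
  rw [mem_multipliers, abs_le] at hk
  refine Finset.mem_erase.2 ⟨hkg, Finset.mem_image.2
    ⟨((k.toNat : ZMod L) * g, ((-k).toNat : ZMod L) * g), ?_, ?_⟩⟩
  · exact Finset.mk_mem_product
      (Finset.mem_image_of_mem (fun j : ℕ => (j : ZMod L) * g) (Finset.mem_range.2 (by omega)))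
      (Finset.mem_image_of_mem (fun j : ℕ => (j : ZMod L) * g) (Finset.mem_range.2 (by omega)))
  · have hsub : ((k.toNat : ℤ) : ZMod L) - ((-k).toNat : ℤ) = k := by
      rw [← Int.cast_sub, Int.toNat_sub_toNat_neg]
    rw [zsmul_eq_mul, ← hsub]
    push_cast
    ring

variable {p : ℕ} [Fact p.Prime]

theorem legendreSym_mul_eq_neg_one {m : ℕ} (hmp : m < p) (hneg : legendreSym p (-1) = -1)
    (hmul : ∀ j : ℕ, 1 ≤ j → j < m → legendreSym p j * legendreSym p (j - m) = -1) {k k' : ℤ}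
    (hk : k ∈ multipliers m) (hk' : k' ∈ multipliers m) (hkk' : k ≡ k' [ZMOD m]) (hne : k ≠ k') :
    legendreSym p k * legendreSym p k' = -1 := by
  wlog hlt : k' < k generalizing k k'
  · rw [mul_comm]
    exact this hk' hk hkk'.symm hne.symm (by omega)
  have hunit : (k : ZMod p) ≠ 0 := by
    rw [Ne, ZMod.intCast_zmod_eq_zero_iff_dvd]
    exact not_dvd_of_mem_multipliers hmp hk
  rw [mem_multipliers, abs_le] at hk hk'
  obtain ⟨t, ht⟩ := hkk'.symm.dvd
  have ht0 : 0 < t := by nlinarith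
  have ht3 : t < 3 := by nlinarith
  interval_cases t
  · obtain ⟨j, rfl⟩ := Int.eq_ofNat_of_zero_le (a := k) (by omega)
    obtain rfl : k' = j - m := by omega
    exact hmul j (by omega) (by omega)
  · obtain rfl : k' = -1 * k := by omega
    rw [legendreSym.mul, hneg, neg_one_mul, mul_neg, ← sq, legendreSym.sq_one p hunit]

theorem IsSplitting.setOf_quadraticChar_eq_one {m : ℕ} (hmp : m < p)
    (hneg : legendreSym p (-1) = -1)
    (hmul : ∀ j : ℕ, 1 ≤ j → j < m → legendreSym p j * legendreSym p (j - m) = -1) :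
    IsSplitting m m 1 {x : ZMod p | quadraticChar (ZMod p) x = 1} where
  zero_notMem := by simp
  eq_of_smul_eq k hk k' hk' hkk' x hx x' hx' h := by
    by_contra hne
    have hχ : ∀ (k : ℤ) (x : ZMod p), quadraticChar (ZMod p) x = 1 →
        quadraticChar (ZMod p) (k • x) = legendreSym p k := fun k x hx => by
      rw [zsmul_eq_mul, map_mul, hx, mul_one, legendreSym]
    have hmul' := legendreSym_mul_eq_neg_one hmp hneg hmul hk hk' hkk' hne
    rw [← hχ k x hx, ← hχ k' x' hx', h] at hmul'
    nlinarith [mul_self_nonneg (quadraticChar (ZMod p) (k' • x'))]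
  exists_smul_eq x hx := by
    obtain h | h := quadraticChar_dichotomy hx
    · exact ⟨1, by simp [mem_multipliers], x, h, one_smul ℤ x⟩
    · refine ⟨-1, by simp [mem_multipliers], -x, ?_, by simp⟩
      have hneg' : quadraticChar (ZMod p) (-1) = -1 := by simpa [legendreSym] using hneg
      rw [Set.mem_ofPred_eq, ← neg_one_mul, map_mul, hneg', h, neg_one_mul, neg_neg]

theorem zsmul_ne_zero_of_mem_multipliers {m : ℕ} (hmp : m < p) {k : ℤ} (hk : k ∈ multipliers m)
    {x : ZMod p} (hx : x ≠ 0) : k • x ≠ 0 := by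
  rw [zsmul_eq_mul, mul_ne_zero_iff, Ne, ZMod.intCast_zmod_eq_zero_iff_dvd]
  exact ⟨not_dvd_of_mem_multipliers hmp hk, hx⟩

variable {m : ℕ} {C : Finset (Finset (ZMod p))} {g : Finset (ZMod p) → ZMod p}

theorem IsCAC.generator_ne_zero (hm : 0 < m) (hC : IsCAC p (m + 1) C)
    (hg : ∀ S ∈ C, S = (Finset.range (m + 1)).image fun j : ℕ => (j : ZMod p) * g S)
    {S : Finset (ZMod p)} (hS : S ∈ C) : g S ≠ 0 := fun hzero => by
  have hS0 : S ⊆ {0} := by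
    rw [hg S hS, hzero]
    simp [Finset.subset_iff]
  have := Finset.card_le_card hS0
  rw [hC.1 S hS, Finset.card_singleton] at this
  omega

theorem IsCAC.injOn_zsmul_generator (hm : 0 < m) (hmp : 2 * m < p) (hC : IsCAC p (m + 1) C)
    (hg : ∀ S ∈ C, S = (Finset.range (m + 1)).image fun j : ℕ => (j : ZMod p) * g S) :
    Set.InjOn (fun q : ℤ × Finset (ZMod p) => q.1 • g q.2) (multipliers m ×ˢ C : Finset _) := by
  have hmem : ∀ k ∈ multipliers m, ∀ S ∈ C, k • g S ∈ dstar S := fun k hk S hS => by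
    have := zsmul_mem_dstar_image_range hk
      (zsmul_ne_zero_of_mem_multipliers (by omega) hk (hC.generator_ne_zero hm hg hS))
    rwa [← hg S hS] at this
  rintro ⟨k, S⟩ hkS ⟨k', S'⟩ hkS' (h : k • g S = k' • g S')
  obtain ⟨hk, hS⟩ := Finset.mem_product.1 (Finset.mem_coe.1 hkS)
  obtain ⟨hk', hS'⟩ := Finset.mem_product.1 (Finset.mem_coe.1 hkS')
  obtain rfl : S = S' := by
    by_contra hne
    exact Finset.disjoint_left.1 (hC.2 S hS S' hS' hne) (hmem k hk S hS) (h ▸ hmem k' hk' S' hS')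
  refine Prod.ext (by_contra fun hne => ?_) rfl
  have hsub : k - k' ∈ multipliers (2 * m) := by
    simp only [mem_multipliers, abs_le] at hk hk' hne ⊢
    omega
  refine zsmul_ne_zero_of_mem_multipliers hmp hsub (hC.generator_ne_zero hm hg hS) ?_
  rw [sub_smul, h, sub_self]

theorem IsCAC.exists_isSplitting (hm : 0 < m) (hmp : 2 * m < p) (hC : IsCAC p (m + 1) C)
    (hequi : ∀ S ∈ C, IsEquiDiff (m + 1) S) (hcard : p - 1 ≤ 2 * m * #C) :
    ∃ Γ : Set (ZMod p), IsSplitting m 1 m Γ := by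
  choose! g hg using hequi
  have hinj := hC.injOn_zsmul_generator hm hmp hg
  have hne : ∀ S ∈ C, g S ≠ 0 := fun S hS => hC.generator_ne_zero hm hg hS
  have hcover : (multipliers m ×ˢ C).image (fun q => q.1 • g q.2) = Finset.univ.erase 0 := by
    refine Finset.eq_of_subset_of_card_le (Finset.image_subset_iff.2 fun q hq => ?_) ?_
    · obtain ⟨hk, hS⟩ := Finset.mem_product.1 hq
      exact Finset.mem_erase.2 ⟨zsmul_ne_zero_of_mem_multipliers (by omega) hk (hne _ hS),
        Finset.mem_univ _⟩
    · rwa [Finset.card_image_of_injOn hinj, Finset.card_product, card_multipliers,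
        Finset.card_erase_of_mem (Finset.mem_univ _), Finset.card_univ, ZMod.card]
  refine ⟨g '' C, ?_, ?_, fun x hx => ?_⟩
  · rintro ⟨S, hS, hzero⟩
    exact hne S hS hzero
  · rintro k hk k' hk' - _ ⟨S, hS, rfl⟩ _ ⟨S', hS', rfl⟩ h
    exact congrArg Prod.fst (hinj (Finset.mk_mem_product hk hS) (Finset.mk_mem_product hk' hS') h)
  · obtain ⟨⟨k, S⟩, hq, rfl⟩ := Finset.mem_image.1
      (hcover.symm ▸ Finset.mem_erase.2 ⟨hx, Finset.mem_univ x⟩)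
    obtain ⟨hk, hS⟩ := Finset.mem_product.1 hq
    exact ⟨k, hk, g S, ⟨S, hS, rfl⟩, rfl⟩

end Prime

section Progression

open scoped Finset

variable {M L : ℕ}

/-- The codeword `{(κ 0, 0), (κ 1, g), …, (κ (w - 1), (w - 1)g)}`: an equi-difference word whose
packets are distributed over the channels by `κ`. -/
def progression (w : ℕ) (κ : ℕ → Fin M) (g : ZMod L) : Finset (Fin M × ZMod L) :=
  (Finset.range w).image fun j => (κ j, j • g)

theorem mem_progression {w : ℕ} {κ : ℕ → Fin M} {g t : ZMod L} {i : Fin M} :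
    (i, t) ∈ progression w κ g ↔ ∃ j < w, κ j = i ∧ j • g = t := by
  simp [progression]

theorem exists_zsmul_eq_of_mem_Darr_progression {w : ℕ} {κ : ℕ → Fin M} {g t : ZMod L}
    {i j : Fin M} (ht : t ∈ Darr (progression w κ g) i j) :
    ∃ a < w, ∃ b < w, a ≠ b ∧ κ a = i ∧ κ b = j ∧ ((a : ℤ) - b) • g = t := by
  obtain ⟨x, y, hx, hy, rfl, hne⟩ := exists_sub_eq_of_mem_Darr ht
  obtain ⟨a, ha, rfl, rfl⟩ := mem_progression.1 hx
  obtain ⟨b, hb, rfl, rfl⟩ := mem_progression.1 hy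
  refine ⟨a, ha, b, hb, ?_, rfl, rfl, by simp only [sub_smul, natCast_zsmul]⟩
  rintro rfl
  exact hne rfl (sub_self _)

/-- The criterion for the progressions with channel assignments `κ q` and generators `g q`, for
`q ∈ I`, to form an AM-OPPTS MC-CAC of weight `m + 1`: the terms of each word are distinct, and the
difference of two terms together with their channels determines the word. -/
structure IsProgressionFamily {ι : Type*} (m : ℕ) (I : Finset ι) (κ : ι → ℕ → Fin M)
    (g : ι → ZMod L) : Prop where
  smul_ne_zero : ∀ q ∈ I, ∀ k ∈ multipliers m, k • g q ≠ 0
  eq_of_smul_eq : ∀ q ∈ I, ∀ q' ∈ I, ∀ a ≤ m, ∀ b ≤ m, ∀ a' ≤ m, ∀ b' ≤ m, a ≠ b → a' ≠ b' →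
    κ q a = κ q' a' → κ q b = κ q' b' → ((a : ℤ) - b) • g q = ((a' : ℤ) - b') • g q' → q = q'

namespace IsProgressionFamily

variable {ι : Type*} {m : ℕ} {I : Finset ι} {κ : ι → ℕ → Fin M} {g : ι → ZMod L}

theorem eq_of_nsmul_eq (h : IsProgressionFamily m I κ g) {q : ι} (hq : q ∈ I) {a b : ℕ}
    (ha : a ≤ m) (hb : b ≤ m) (hab : a • g q = b • g q) : a = b := by
  by_contra hne
  refine h.smul_ne_zero q hq _ (natCast_sub_mem_multipliers ha hb hne) ?_
  rw [sub_smul, natCast_zsmul, natCast_zsmul, hab, sub_self]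

theorem eq_of_mem_Darr (h : IsProgressionFamily m I κ g) {q q' : ι} (hq : q ∈ I) (hq' : q' ∈ I)
    {i j : Fin M} {t : ZMod L} (ht : t ∈ Darr (progression (m + 1) (κ q) (g q)) i j)
    (ht' : t ∈ Darr (progression (m + 1) (κ q') (g q')) i j) : q = q' := by
  obtain ⟨a, ha, b, hb, hab, rfl, rfl, rfl⟩ := exists_zsmul_eq_of_mem_Darr_progression ht
  obtain ⟨a', ha', b', hb', hab', hi, hj, heq⟩ := exists_zsmul_eq_of_mem_Darr_progression ht'
  exact h.eq_of_smul_eq q hq q' hq' a (by omega) b (by omega) a' (by omega) b' (by omega)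
    hab hab' hi.symm hj.symm heq.symm

theorem isAMOPPTSMCCAC (h : IsProgressionFamily m I κ g) :
    IsAMOPPTSMCCAC M L (m + 1) (I.image fun q => progression (m + 1) (κ q) (g q)) := by
  simp only [IsAMOPPTSMCCAC, IsMCCAC, Finset.forall_mem_image]
  refine ⟨⟨fun q hq => ?_, fun q hq q' hq' hne i j => ?_⟩, fun q hq t i j hi hj => ?_⟩
  · rw [progression, Finset.card_image_of_injOn, Finset.card_range]
    intro a ha b hb hab
    rw [Finset.mem_coe, Finset.mem_range, Nat.lt_succ_iff] at ha hb
    exact h.eq_of_nsmul_eq hq ha hb (congrArg Prod.snd hab)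
  · refine Finset.disjoint_left.2 fun t ht ht' => hne ?_
    rw [h.eq_of_mem_Darr hq hq' ht ht']
  · obtain ⟨a, ha, rfl, rfl⟩ := mem_progression.1 hi
    obtain ⟨b, hb, rfl, hab⟩ := mem_progression.1 hj
    rw [h.eq_of_nsmul_eq hq (by omega) (by omega) hab]

theorem card_image (h : IsProgressionFamily m I κ g) (hm : 0 < m) :
    #(I.image fun q => progression (m + 1) (κ q) (g q)) = #I := by
  refine Finset.card_image_of_injOn fun q hq q' hq' heq => ?_
  have hdiff : 1 • g q - 0 • g q ∈
      Darr (progression (m + 1) (κ q) (g q)) (κ q 1) (κ q 0) := by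
    refine sub_mem_Darr (mem_progression.2 ⟨1, by omega, rfl, rfl⟩)
      (mem_progression.2 ⟨0, by omega, rfl, rfl⟩) fun h10 => ?_
    exact one_ne_zero (h.eq_of_nsmul_eq hq hm (Nat.zero_le m) h10)
  exact h.eq_of_mem_Darr hq hq' hdiff ((show progression _ _ _ = _ from heq) ▸ hdiff)

end IsProgressionFamily

end Progression

section Construction

open scoped Finset

variable {m P : ℕ}

/-- The channel of the `j`-th packet. Words of the first kind are mixed: they send their first
packet on channel `f + 1` and the others on `f`. Words of the second kind stay on channel `f`. -/
def wordChannel {α β : Type*} (q : Fin 2 × (α ⊕ β)) (j : ℕ) : Fin 2 :=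
  q.2.elim (fun _ => if j = 0 then q.1 + 1 else q.1) fun _ => q.1

/-- The generator with residue `x` modulo `P`, and with residue `1` modulo `m` for a mixed word,
residue `0` for a word on one channel. -/
def wordGenerator (hmP : m.Coprime P) (q : Fin 2 × (ZMod P ⊕ ZMod P)) : ZMod (m * P) :=
  (ZMod.chineseRemainder hmP).symm (q.2.elim (fun x => (1, x)) fun x => (0, x))

theorem zsmul_wordGenerator_eq_iff {hmP : m.Coprime P} {q q' : Fin 2 × (ZMod P ⊕ ZMod P)}
    {k k' : ℤ} : k • wordGenerator hmP q = k' • wordGenerator hmP q' ↔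
      k • q.2.elim (fun x => ((1, x) : ZMod m × ZMod P)) (fun x => (0, x)) =
      k' • q'.2.elim (fun x => ((1, x) : ZMod m × ZMod P)) fun x => (0, x) := by
  rw [wordGenerator, wordGenerator, ← map_zsmul, ← map_zsmul,
    (ZMod.chineseRemainder hmP).symm.injective.eq_iff]

theorem zsmul_wordGenerator_inl_eq_inl_iff {hmP : m.Coprime P} {f f' : Fin 2} {x x' : ZMod P}
    {k k' : ℤ} :
    k • wordGenerator hmP (f, .inl x) = k' • wordGenerator hmP (f', .inl x') ↔
      k ≡ k' [ZMOD m] ∧ k • x = k' • x' := by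
  rw [zsmul_wordGenerator_eq_iff, ← ZMod.intCast_eq_intCast_iff]
  simp

theorem zsmul_wordGenerator_inl_eq_inr_iff {hmP : m.Coprime P} {f f' : Fin 2} {x x' : ZMod P}
    {k k' : ℤ} :
    k • wordGenerator hmP (f, .inl x) = k' • wordGenerator hmP (f', .inr x') ↔
      (m : ℤ) ∣ k ∧ k • x = k' • x' := by
  rw [zsmul_wordGenerator_eq_iff, ← ZMod.intCast_zmod_eq_zero_iff_dvd]
  simp

theorem zsmul_wordGenerator_inr_eq_inr_iff {hmP : m.Coprime P} {f f' : Fin 2} {x x' : ZMod P}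
    {k k' : ℤ} :
    k • wordGenerator hmP (f, .inr x) = k' • wordGenerator hmP (f', .inr x') ↔
      k • x = k' • x' := by
  rw [zsmul_wordGenerator_eq_iff]
  simp

theorem wordChannel_ne_of_dvd_sub {α β : Type*} {f : Fin 2} {x : α} {a b : ℕ} (ha : a ≤ m)
    (hb : b ≤ m) (hab : a ≠ b) (hdvd : (m : ℤ) ∣ (a : ℤ) - b) :
    wordChannel (f, (.inl x : α ⊕ β)) a ≠ wordChannel (f, (.inl x : α ⊕ β)) b := by
  have hf : f ≠ f + 1 := by simp
  have hzero : a = 0 ∧ b ≠ 0 ∨ a ≠ 0 ∧ b = 0 := by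
    obtain hlt | hlt := hab.lt_or_gt
    · have := Int.le_of_dvd (by omega) ((dvd_sub_comm).1 hdvd)
      omega
    · have := Int.le_of_dvd (by omega) hdvd
      omega
  obtain ⟨rfl, hb⟩ | ⟨ha, rfl⟩ := hzero <;> simp [wordChannel, *]

theorem eq_of_wordChannel_inl_eq {α β : Type*} {f f' : Fin 2} {x x' : α} {a b a' b' : ℕ}
    (hab : a ≠ b) (hsub : (a : ℤ) - b = a' - b')
    (hchan : wordChannel (f, (.inl x : α ⊕ β)) a = wordChannel (f', (.inl x' : α ⊕ β)) a')
    (hchan' : wordChannel (f, (.inl x : α ⊕ β)) b = wordChannel (f', (.inl x' : α ⊕ β)) b') :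
    f = f' := by
  by_contra hne
  have hzero : ∀ c c', wordChannel (f, (.inl x : α ⊕ β)) c =
      wordChannel (f', (.inl x' : α ⊕ β)) c' → (c = 0 ↔ c' ≠ 0) := fun c c' h => by
    simp only [wordChannel, Sum.elim_inl] at h
    split_ifs at h <;> simp_all
  have := hzero a a' hchan
  have := hzero b b' hchan'
  omega

theorem isProgressionFamily_disjSum (hmP : m.Coprime P) {X Γ : Finset (ZMod P)}
    (hsmul : ∀ k ∈ multipliers m, Function.Injective fun x : ZMod P => k • x)
    (hX : IsSplitting m m 1 (X : Set (ZMod P))) (hΓ : IsSplitting m 1 m (Γ : Set (ZMod P))) :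
    IsProgressionFamily m (Finset.univ ×ˢ X.disjSum Γ) wordChannel (wordGenerator hmP) where
  smul_ne_zero := by
    rintro ⟨f, x | x⟩ hq k hk h
    all_goals
      simp only [Finset.mem_product, Finset.mem_univ, true_and, Finset.inl_mem_disjSum,
        Finset.inr_mem_disjSum] at hq
      rw [← zero_smul ℤ (wordGenerator hmP (f, .inr x))] at h
    · rw [zsmul_wordGenerator_inl_eq_inr_iff, zero_smul, ← smul_zero k] at h
      exact hX.zero_notMem (hsmul k hk h.2 ▸ hq)
    · rw [zsmul_wordGenerator_inr_eq_inr_iff, zero_smul, ← smul_zero k] at h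
      exact hΓ.zero_notMem (hsmul k hk h ▸ hq)
  eq_of_smul_eq := by
    rintro ⟨f, x | x⟩ hq ⟨f', x' | x'⟩ hq' a ha b hb a' ha' b' hb' hab hab' hchan hchan' h
    all_goals
      have hk := natCast_sub_mem_multipliers ha hb hab
      have hk' := natCast_sub_mem_multipliers ha' hb' hab'
      simp only [Finset.mem_product, Finset.mem_univ, true_and, Finset.inl_mem_disjSum,
        Finset.inr_mem_disjSum] at hq hq'
    · rw [zsmul_wordGenerator_inl_eq_inl_iff] at h
      have hkk' := hX.eq_of_smul_eq _ hk _ hk' h.1 x hq x' hq' h.2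
      obtain rfl := hsmul _ hk (h.2.trans (congrArg (· • x') hkk'.symm))
      rw [eq_of_wordChannel_inl_eq hab hkk' hchan hchan']
    · rw [zsmul_wordGenerator_inl_eq_inr_iff] at h
      exact absurd (hchan.trans hchan'.symm) (wordChannel_ne_of_dvd_sub ha hb hab h.1)
    · rw [eq_comm, zsmul_wordGenerator_inl_eq_inr_iff] at h
      exact absurd (hchan.symm.trans hchan') (wordChannel_ne_of_dvd_sub ha' hb' hab' h.1)
    · rw [zsmul_wordGenerator_inr_eq_inr_iff] at h
      have hkk' := hΓ.eq_of_smul_eq _ hk _ hk' Int.modEq_one x hq x' hq' h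
      obtain rfl := hsmul _ hk (h.trans (congrArg (· • x') hkk'.symm))
      exact congrArg (·, Sum.inr x) hchan

theorem exists_isAMOPPTSMCCAC_of_isSplitting [NeZero P] (hm : 0 < m)
    (hP : ∀ q, q.Prime → q ∣ P → m < q) {X Γ : Set (ZMod P)} (hX : IsSplitting m m 1 X)
    (hΓ : IsSplitting m 1 m Γ) :
    ∃ C : Finset (Finset (Fin 2 × ZMod (m * P))),
      IsAMOPPTSMCCAC 2 (m * P) (m + 1) C ∧ P + (P - 1) / m - 1 ≤ #C := by
  have hmP : m.Coprime P := Nat.coprime_of_dvd fun q hq hqm hqP =>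
    (hP q hq hqP).not_ge (Nat.le_of_dvd hm hqm)
  lift X to Finset (ZMod P) using X.toFinite
  lift Γ to Finset (ZMod P) using Γ.toFinite
  have hfamily := isProgressionFamily_disjSum hmP (fun k hk =>
    (zsmul_bijective_of_mem_multipliers (by rwa [Nat.card_zmod]) hk).injective) hX hΓ
  refine ⟨_, hfamily.isAMOPPTSMCCAC, ?_⟩
  rw [hfamily.card_image hm, Finset.card_product, Finset.card_univ, Fintype.card_fin,
    Finset.card_disjSum]
  have hXcard := hX.natCard_sub_one_le
  have hΓcard := hΓ.natCard_sub_one_le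
  rw [Nat.card_zmod] at hXcard hΓcard
  have hdiv : (P - 1) / m ≤ 2 * #Γ :=
    Nat.div_le_of_le_mul (hΓcard.trans_eq (by ring))
  omega

theorem exists_isAMOPPTSMCCAC [NeZero P] (hm : 0 < m)
    (hP : ∀ q, q.Prime → q ∣ P → m < q ∧ (∃ X : Set (ZMod q), IsSplitting m m 1 X) ∧
      ∃ Γ : Set (ZMod q), IsSplitting m 1 m Γ) :
    ∃ C : Finset (Finset (Fin 2 × ZMod (m * P))),
      IsAMOPPTSMCCAC 2 (m * P) (m + 1) C ∧ P + (P - 1) / m - 1 ≤ #C := by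
  obtain ⟨X, hX⟩ : ∃ X : Set (ZMod P), IsSplitting m m 1 X :=
    IsSplitting.exists_of_forall_prime hm fun q hq hqP =>
      have h := hP q hq (Nat.card_zmod P ▸ hqP)
      ⟨h.1, h.2.1⟩
  obtain ⟨Γ, hΓ⟩ : ∃ Γ : Set (ZMod P), IsSplitting m 1 m Γ :=
    IsSplitting.exists_of_forall_prime le_rfl fun q hq hqP =>
      have h := hP q hq (Nat.card_zmod P ▸ hqP)
      ⟨h.1, h.2.2⟩
  exact exists_isAMOPPTSMCCAC_of_isSplitting hm (fun q hq hqP => (hP q hq hqP).1) hX hΓ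

end Construction

theorem dvd_prod_pow_sub_one {ι : Type*} (s : Finset ι) {d : ℕ} {p : ι → ℕ} (r : ι → ℕ)
    (hp : ∀ i ∈ s, 0 < p i) (hd : ∀ i ∈ s, d ∣ p i - 1) : d ∣ ∏ i ∈ s, p i ^ r i - 1 := by
  have hmod : ∏ i ∈ s, p i ^ r i ≡ 1 [MOD d] := by
    refine Finset.prod_induction _ (· ≡ 1 [MOD d]) (fun a b ha hb => ?_) rfl fun i hi => ?_
    · simpa using ha.mul hb
    · simpa using ((Nat.modEq_iff_dvd' (hp i hi)).2 (hd i hi)).symm.pow (r i)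
  exact (Nat.modEq_iff_dvd' (Finset.prod_pos fun i hi => pow_pos (hp i hi) _)).1 hmod.symm

theorem exists_eq_of_prime_dvd_prod_pow {ι : Type*} {s : Finset ι} {p r : ι → ℕ}
    (hp : ∀ i ∈ s, (p i).Prime) {q : ℕ} (hq : q.Prime) (h : q ∣ ∏ i ∈ s, p i ^ r i) :
    ∃ i ∈ s, p i = q := by
  obtain ⟨i, hi, hdvd⟩ := (hq.prime.dvd_finsetProd_iff _).1 h
  exact ⟨i, hi, ((Nat.prime_dvd_prime_iff_eq hq (hp i hi)).1 (hq.dvd_of_dvd_pow hdvd)).symm⟩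

theorem stmt_13 (w n : ℕ) (hw : 2 ≤ w) (p : Fin n → ℕ) (hp : ∀ i, (p i).Prime)
    (hmono : StrictMono p) (hdvd : ∀ i, 2 * w - 2 ∣ p i - 1)
    (hCAC : ∀ i, ∃ C : Finset (Finset (ZMod (p i))),
      IsCAC (p i) w C ∧ (∀ S ∈ C, IsEquiDiff w S) ∧ C.card = (p i - 1) / (2 * w - 2))
    (hQ1 : ∀ i, @legendreSym (p i) ⟨hp i⟩ (-1) = -1)
    (hQ2 : ∀ i, ∀ j : ℕ, 1 ≤ j → j ≤ w - 2 →
      @legendreSym (p i) ⟨hp i⟩ (j : ℤ) * @legendreSym (p i) ⟨hp i⟩ ((j : ℤ) - w + 1) = -1)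
    (r : Fin n → ℕ) (hr : ∀ i, 0 < r i) :
    (∃ C : Finset (Finset (Fin 2 × ZMod ((w - 1) * ∏ i, p i ^ r i))),
      IsAMOPPTSMCCAC 2 ((w - 1) * ∏ i, p i ^ r i) w C ∧
      (∏ i, p i ^ r i) + ((∏ i, p i ^ r i) - 1) / (w - 1) - 1 ≤ C.card) ∧
    (∀ C : Finset (Finset (Fin 2 × ZMod ((w - 1) * ∏ i, p i ^ r i))),
      IsAMOPPTSMCCAC 2 ((w - 1) * ∏ i, p i ^ r i) w C →
      C.card ≤ (∏ i, p i ^ r i) + ((∏ i, p i ^ r i) - 1) / (w - 1)) := by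
  obtain ⟨m, rfl⟩ : ∃ m, w = m + 1 := ⟨w - 1, by omega⟩
  have hm : 0 < m := by omega
  rw [show 2 * (m + 1) - 2 = 2 * m by omega] at hdvd hCAC
  rw [Nat.add_sub_cancel]
  have hlarge : ∀ i, 2 * m < p i := fun i => by
    have := Nat.le_of_dvd (Nat.sub_pos_of_lt (hp i).one_lt) (hdvd i)
    omega
  have : NeZero m := ⟨hm.ne'⟩
  have : NeZero (∏ i, p i ^ r i) :=
    ⟨Finset.prod_ne_zero_iff.2 fun i _ => pow_ne_zero _ (hp i).ne_zero⟩
  refine ⟨exists_isAMOPPTSMCCAC hm fun q hq hqP => ?_,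
    fun C => card_le_of_isAMOPPTSMCCAC ?_ fun q hq hqP => ?_⟩
  · obtain ⟨i, -, rfl⟩ := exists_eq_of_prime_dvd_prod_pow (fun i _ => hp i) hq hqP
    have := Fact.mk hq
    have hmp : m < p i := by have := hlarge i; omega
    obtain ⟨C, hC, hequi, hcard⟩ := hCAC i
    have hX := IsSplitting.setOf_quadraticChar_eq_one hmp (hQ1 i) fun j hj hjm => by
      simpa [sub_add_eq_sub_sub, sub_right_comm] using hQ2 i j hj (by omega)
    exact ⟨hmp, ⟨_, hX⟩, hC.exists_isSplitting hm (hlarge i) hequi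
      (hcard ▸ (Nat.mul_div_cancel' (hdvd i)).ge)⟩
  · exact dvd_of_mul_left_dvd (dvd_prod_pow_sub_one _ r (fun i _ => (hp i).pos) fun i _ => hdvd i)
  · obtain ⟨i, -, rfl⟩ := exists_eq_of_prime_dvd_prod_pow (fun i _ => hp i) hq hqP
    exact hlarge i
end

section
/- Let A and B be nonempty subsets of Z_L with |A| = |B| and |A - B| ≤ |A| + |B| - 2. Then |H(A - B)| does not divide |A| - 1. -/
/-- The difference set `A - B = {a - b : a ∈ A, b ∈ B}` in `Z_L`. -/
def fdiff {L : ℕ} (A B : Finset (ZMod L)) : Finset (ZMod L) :=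
  (A ×ˢ B).image fun p => p.1 - p.2

/-- The stabilizer `H(T) = {h ∈ Z_L : h + T = T}` of a subset `T ⊆ Z_L`. -/
def stab {L : ℕ} [NeZero L] (T : Finset (ZMod L)) : Finset (ZMod L) :=
  Finset.univ.filter fun h => T.image (fun t => h + t) = T

/-!
Write `H` for the stabilizer of `A - B`. Kneser's theorem, applied to the saturations `A + H` and
`B + H`, gives `|A + H| + |B + H| ≤ |A - B| + |H|`. If `|H|` divides `|A| - 1` and `|B| - 1`, then
the multiples `|A + H|` and `|B + H|` of `|H|` are at least `|A| - 1 + |H|` and `|B| - 1 + |H|`,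
whence `|A - B| ≥ |A| + |B| - 2 + |H|`, so the pair is not exceptional.

Kneser's theorem `|A| + |B| ≤ |A + B| + |H(A + B)|` is proved after Kemperman. Dyson transforms
produce, around each point of `A + B`, a set `D ⊆ A + B` with `|A| + |B| ≤ |D| + |H(D)|`, and a
lower bound on `|D| + |H(D)|` passes to unions, hence to `A + B` itself.
-/

section

open AddAction Finset
open scoped Pointwise

section AddGroup

variable {G : Type*} [AddGroup G]

theorem card_sub_one_add_card_le_ncard_add (H : AddSubgroup G) [Finite H] {A : Finset G}
    (hA : A.Nonempty) (hdvd : Nat.card H ∣ #A - 1) :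
    #A - 1 + Nat.card H ≤ ((A : Set G) + H).ncard := by
  have hfin : ((A : Set G) + H).Finite := A.finite_toSet.add (Set.toFinite _)
  have hdvd_add : Nat.card H ∣ ((A : Set G) + H).ncard :=
    ⟨_, AddSubgroup.card_add_eq_card_addSubgroup_add_card_quotient H A⟩
  have hle : #A ≤ ((A : Set G) + H).ncard := by
    rw [← Set.ncard_coe_finset]
    exact Set.ncard_le_ncard (Set.subset_add_left _ H.zero_mem) hfin
  have hpos := hA.card_pos
  have := Nat.le_of_dvd (by lia) (Nat.dvd_sub hdvd_add hdvd)
  lia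

theorem stabilizer_subset_of_zero_mem {T : Set G} (h0T : 0 ∈ T) :
    (stabilizer G T : Set G) ⊆ T := fun x hx => by
  simpa only [vadd_eq_add, add_zero] using (mem_stabilizer_set.1 hx 0).2 h0T

theorem disjoint_stabilizer_of_zero_notMem {S : Set G} (h0S : 0 ∉ S) :
    Disjoint (stabilizer G S : Set G) S :=
  Set.disjoint_left.2 fun x hx => by
    simpa only [vadd_eq_add, add_zero] using mt (mem_stabilizer_set.1 hx 0).1 h0S

theorem finite_stabilizer_finset_s18 [DecidableEq G] {S : Finset G} (hS : S.Nonempty) :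
    Finite (stabilizer G S) := by
  rw [← stabilizer_coe_finset]
  exact stabilizer_finite hS S.finite_toSet

theorem stabilizer_inf_stabilizer_le_stabilizer_finset_union {α : Type*} [DecidableEq α]
    [AddAction G α] (S T : Finset α) :
    stabilizer G S ⊓ stabilizer G T ≤ stabilizer G (S ∪ T) := by
  simpa only [← stabilizer_coe_finset, coe_union] using
    stabilizer_inf_stabilizer_le_stabilizer_union (G := G) (s := (S : Set α)) (t := (T : Set α))

end AddGroup

variable {G : Type*} [AddCommGroup G]

theorem ncard_add_ncard_le_ncard_add_add_card_inf {H K : AddSubgroup G}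
    [Finite (H ⊓ K : AddSubgroup G)] {U V : Set G} (hU : U.Nonempty) (hV : V.Nonempty)
    (hUfin : U.Finite) (hVfin : V.Finite) (hUH : U ⊆ H) (hVK : V ⊆ K) :
    U.ncard + V.ncard ≤ (U + V).ncard + Nat.card (H ⊓ K : AddSubgroup G) := by
  obtain ⟨u, hu⟩ := hU
  obtain ⟨v, hv⟩ := hV
  have hunion : (v +ᵥ U) ∪ (u +ᵥ V) ⊆ U + V := by
    refine Set.union_subset ?_ (Set.vadd_set_subset_add hu)
    rw [add_comm U V]
    exact Set.vadd_set_subset_add hv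
  have hinter : (v +ᵥ U) ∩ (u +ᵥ V) ⊆ (u + v) +ᵥ ((H ⊓ K : AddSubgroup G) : Set G) := by
    rintro _ ⟨⟨u', hu', rfl⟩, v', hv', hvu⟩
    have hsub : u' - u = v' - v := by
      rw [sub_eq_sub_iff_add_eq_add, add_comm u', add_comm v']
      exact hvu.symm
    refine ⟨u' - u, ⟨H.sub_mem (hUH hu') (hUH hu), ?_⟩, ?_⟩
    · exact hsub ▸ K.sub_mem (hVK hv') (hVK hv)
    · simp only [vadd_eq_add]
      abel
  calc U.ncard + V.ncard = (v +ᵥ U).ncard + (u +ᵥ V).ncard := by simp only [Set.ncard_vadd_set]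
    _ = ((v +ᵥ U) ∪ (u +ᵥ V)).ncard + ((v +ᵥ U) ∩ (u +ᵥ V)).ncard :=
      (Set.ncard_union_add_ncard_inter _ _ hUfin.vadd_set hVfin.vadd_set).symm
    _ ≤ (U + V).ncard + ((u + v) +ᵥ ((H ⊓ K : AddSubgroup G) : Set G)).ncard :=
      add_le_add (Set.ncard_le_ncard hunion (hUfin.add hVfin))
        (Set.ncard_le_ncard hinter (Set.toFinite _).vadd_set)
    _ = (U + V).ncard + Nat.card (H ⊓ K : AddSubgroup G) := by
      rw [Set.ncard_vadd_set]
      rfl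

theorem stabilizer_sdiff_add_stabilizer_inter_subset (S T : Set G) :
    (stabilizer G T : Set G) \ S + (stabilizer G S : Set G) ∩ T ⊆ T \ S := by
  rintro _ ⟨x, ⟨hxT, hxS⟩, y, ⟨hyS, hyT⟩, rfl⟩
  refine ⟨(mem_stabilizer_set.1 hxT y).2 hyT, ?_⟩
  simpa only [vadd_eq_add, add_comm] using mt (mem_stabilizer_set.1 hyS x).1 hxS

theorem ncard_stabilizer_sdiff_add_ncard_stabilizer_inter_le {S T : Set G} (hT : T.Finite)
    (hTS : ((stabilizer G T : Set G) \ S).Nonempty)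
    (hST : ((stabilizer G S : Set G) ∩ T).Nonempty) :
    ((stabilizer G T : Set G) \ S).ncard + ((stabilizer G S : Set G) ∩ T).ncard ≤
      (T \ S).ncard + Nat.card ↑(stabilizer G S ⊓ stabilizer G T) := by
  have : Finite (stabilizer G T) := stabilizer_finite (hST.mono Set.inter_subset_right) hT
  have : Finite ↑(stabilizer G T ⊓ stabilizer G S) :=
    Finite.Set.subset (stabilizer G T : Set G) inf_le_left
  rw [inf_comm]
  refine (ncard_add_ncard_le_ncard_add_add_card_inf hTS hST (Set.toFinite _)
    (hT.subset Set.inter_subset_right) Set.sdiff_subset Set.inter_subset_left).trans ?_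
  exact Nat.add_le_add_right
    (Set.ncard_le_ncard (stabilizer_sdiff_add_stabilizer_inter_subset S T) hT.sdiff) _

theorem card_stabilizer_le_of_zero_mem {S T : Set G} (hS : S.Finite) (hT : T.Finite)
    (h0T : 0 ∈ T) (h0S : 0 ∉ S) (hle : (T \ S).ncard ≤ (S \ T).ncard) :
    Nat.card (stabilizer G S) ≤
        (T \ S).ncard + Nat.card ↑(stabilizer G S ⊓ stabilizer G T) ∨
      Nat.card (stabilizer G T) ≤
        (S \ T).ncard + Nat.card ↑(stabilizer G S ⊓ stabilizer G T) := by
  set H := stabilizer G S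
  set K := stabilizer G T
  have hST_pos : 0 < (S \ T).ncard :=
    ((Set.ncard_pos hT.sdiff).2 ⟨0, h0T, h0S⟩).trans_le hle
  have hS_ne : S.Nonempty := (Set.nonempty_of_ncard_ne_zero hST_pos.ne').mono Set.sdiff_subset
  have : Finite H := stabilizer_finite hS_ne hS
  have : Finite K := stabilizer_finite ⟨0, h0T⟩ hT
  have hKT : (K : Set G) ⊆ T := stabilizer_subset_of_zero_mem h0T
  have hHS : Disjoint (H : Set G) S := disjoint_stabilizer_of_zero_notMem h0S
  rcases ((K : Set G) ∩ S).eq_empty_or_nonempty with hKS | hKS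
  · have hK : (K : Set G) ⊆ T \ S := Set.subset_sdiff.2 ⟨hKT, Set.disjoint_iff_inter_eq_empty.2 hKS⟩
    have hcardK : Nat.card K ≤ (T \ S).ncard := Set.ncard_le_ncard hK hT.sdiff
    lia
  rcases ((H : Set G) \ T).eq_empty_or_nonempty with hHT | hHT
  · have hH : (H : Set G) ⊆ T \ S := Set.subset_sdiff.2 ⟨Set.sdiff_eq_empty.1 hHT, hHS⟩
    have hcardH : Nat.card H ≤ (T \ S).ncard := Set.ncard_le_ncard hH hT.sdiff
    lia
  -- All four parts of `H = (H ∩ T) ∪ (H \ T)` and `K = (K ∩ S) ∪ (K \ S)` are nonempty, so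
  -- `hTS` and `hST` add up to `|H| + |K| ≤ |T \ S| + |S \ T| + 2 |H ⊓ K|`.
  have hTS := ncard_stabilizer_sdiff_add_ncard_stabilizer_inter_le hT (S := S)
    ⟨0, K.zero_mem, h0S⟩ ⟨0, H.zero_mem, h0T⟩
  have hST := ncard_stabilizer_sdiff_add_ncard_stabilizer_inter_le hS hHT hKS
  have hcardH : _ = Nat.card H := Set.ncard_inter_add_ncard_sdiff_eq_ncard (H : Set G) T
  have hcardK : _ = Nat.card K := Set.ncard_inter_add_ncard_sdiff_eq_ncard (K : Set G) S
  rw [inf_comm] at hST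
  lia

theorem card_stabilizer_le_of_sdiff_nonempty {S T : Set G} (hS : S.Finite) (hT : T.Finite)
    (hTS : (T \ S).Nonempty) (hle : (T \ S).ncard ≤ (S \ T).ncard) :
    Nat.card (stabilizer G S) ≤
        (T \ S).ncard + Nat.card ↑(stabilizer G S ⊓ stabilizer G T) ∨
      Nat.card (stabilizer G T) ≤
        (S \ T).ncard + Nat.card ↑(stabilizer G S ⊓ stabilizer G T) := by
  obtain ⟨c, hcT, hcS⟩ := hTS
  have htranslate := card_stabilizer_le_of_zero_mem (S := -c +ᵥ S) (T := -c +ᵥ T) hS.vadd_set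
    hT.vadd_set (by simpa [Set.mem_neg_vadd_set_iff] using hcT)
    (by simpa [Set.mem_neg_vadd_set_iff] using hcS)
    (by simpa only [← Set.vadd_set_sdiff, Set.ncard_vadd_set] using hle)
  simpa only [← Set.vadd_set_sdiff, Set.ncard_vadd_set, stabilizer_vadd_eq_right] using htranslate

variable [DecidableEq G]

theorem min_card_add_card_stabilizer_le_union (S T : Finset G) :
    min (#S + Nat.card (stabilizer G S)) (#T + Nat.card (stabilizer G T)) ≤
      #(S ∪ T) + Nat.card (stabilizer G (S ∪ T)) := by
  wlog hle : #(T \ S) ≤ #(S \ T) generalizing S T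
  · rw [min_comm, union_comm]
    exact this T S (le_of_not_ge hle)
  rcases (T \ S).eq_empty_or_nonempty with hTS | hTS
  · rw [union_eq_left.2 (sdiff_eq_empty_iff_subset.1 hTS)]
    exact min_le_left _ _
  have := finite_stabilizer_finset_s18 (hTS.mono (sdiff_subset.trans (subset_union_right (s₁ := S))))
  have hinf := AddSubgroup.card_le_of_le
    (stabilizer_inf_stabilizer_le_stabilizer_finset_union (G := G) S T)
  have hcardS : #S + #(T \ S) = #(S ∪ T) := by rw [add_comm, card_sdiff_add_card, union_comm]
  have hcardT : #T + #(S \ T) = #(S ∪ T) := by rw [add_comm, card_sdiff_add_card]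
  have hstab := card_stabilizer_le_of_sdiff_nonempty S.finite_toSet T.finite_toSet
    (by exact_mod_cast hTS) (by simpa only [← coe_sdiff, Set.ncard_coe_finset] using hle)
  simp only [← coe_sdiff, Set.ncard_coe_finset, stabilizer_coe_finset] at hstab
  lia

theorem card_le_card_stabilizer_of_add_subset_vadd {A B : Finset G} {b : G} (hA : A.Nonempty)
    (hAB : A + B ⊆ b +ᵥ A) : #B ≤ Nat.card (stabilizer G A) := by
  have hsub : ((-b +ᵥ B : Finset G) : Set G) ⊆ stabilizer G A := by
    intro x hx
    obtain ⟨y, hy, rfl⟩ := mem_vadd_finset.1 hx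
    refine mem_stabilizer_finset'.2 fun a ha => ?_
    rw [vadd_assoc, neg_vadd_mem_iff, vadd_eq_add, add_comm y]
    exact hAB (add_mem_add ha hy)
  have := finite_stabilizer_finset_s18 hA
  rw [← card_vadd_finset (-b) B, ← Set.ncard_coe_finset]
  exact Set.ncard_le_ncard hsub

theorem exists_subset_add_card_add_card_le {A B : Finset G} {a b : G} (ha : a ∈ A) (hb : b ∈ B) :
    ∃ D ⊆ A + B, a + b ∈ D ∧ #A + #B ≤ #D + Nat.card (stabilizer G D) := by
  -- Dyson transforms `(A, B) ↦ (A ∪ (e + B), B ∩ (A - e))` with `e ∈ A - b` keep `a ∈ A`, `b ∈ B`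
  -- and `|A| + |B|`. Some `e` shrinks `B` unless `A + B ⊆ A + b`, and then `D = A + b` works.
  induction hn : #B using Nat.strong_induction_on generalizing A B with | _ n ih
  subst hn
  by_cases hAB : A + B ⊆ b +ᵥ A
  · refine ⟨b +ᵥ A, ?_, ?_, ?_⟩
    · exact add_comm A B ▸ vadd_finset_subset_add hb
    · exact add_comm a b ▸ vadd_mem_vadd_finset ha
    · rw [card_vadd_finset, stabilizer_vadd_eq_right]
      exact Nat.add_le_add_left (card_le_card_stabilizer_of_add_subset_vadd ⟨a, ha⟩ hAB) _
  · simp only [add_subset_iff, not_forall] at hAB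
    obtain ⟨x, hx, y, hy, hxy⟩ := hAB
    set e := x - b
    have hb_mem : b ∈ (addDysonETransform e (A, B)).2 :=
      mem_inter.2 ⟨hb, mem_neg_vadd_finset_iff.2 (by rwa [vadd_eq_add, sub_add_cancel])⟩
    have hy_notMem : y ∉ (addDysonETransform e (A, B)).2 := by
      intro h
      have heA : e + y ∈ A := mem_neg_vadd_finset_iff.1 (mem_inter.1 h).2
      rw [sub_add_eq_add_sub, sub_eq_neg_add] at heA
      exact hxy (neg_vadd_mem_iff.1 heA)
    have hlt : #(addDysonETransform e (A, B)).2 < #B :=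
      card_lt_card ⟨inter_subset_left, fun h => hy_notMem (h hy)⟩
    obtain ⟨D, hD, hab, hcard⟩ := ih _ hlt (mem_union_left _ ha) hb_mem rfl
    exact ⟨D, hD.trans (addDysonETransform.subset e (A, B)), hab,
      (addDysonETransform.card e (A, B)).symm.trans_le hcard⟩

theorem card_add_card_le_card_add_add_card_stabilizer {A B : Finset G} (hA : A.Nonempty)
    (hB : B.Nonempty) : #A + #B ≤ #(A + B) + Nat.card (stabilizer G (A + B)) := by
  have hlocal : ∀ x ∈ A + B, ∃ D ⊆ A + B, x ∈ D ∧ #A + #B ≤ #D + Nat.card (stabilizer G D) := by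
    intro x hx
    obtain ⟨a, ha, b, hb, rfl⟩ := mem_add.1 hx
    exact exists_subset_add_card_add_card_le ha hb
  choose! D hsub hmem hcard using hlocal
  have hcover : (A + B).sup' (hA.add hB) D = A + B :=
    le_antisymm (sup'_le _ _ hsub) fun x hx => le_sup' D hx (hmem x hx)
  rw [← hcover]
  exact sup'_induction (hA.add hB) D
    (p := fun D => #A + #B ≤ #D + Nat.card (stabilizer G D))
    (fun S hS T hT => (le_min hS hT).trans (min_card_add_card_stabilizer_le_union S T)) hcard

theorem ncard_add_stabilizer_add_ncard_add_stabilizer_le {A B : Finset G} (hA : A.Nonempty)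
    (hB : B.Nonempty) :
    ((A : Set G) + stabilizer G (A + B)).ncard + ((B : Set G) + stabilizer G (A + B)).ncard ≤
      #(A + B) + Nat.card (stabilizer G (A + B)) := by
  set H := stabilizer G (A + B) with hH
  have := finite_stabilizer_finset_s18 (hA.add hB)
  obtain ⟨A', hA'⟩ := (A.finite_toSet.add (Set.toFinite (H : Set G))).exists_finset_coe
  obtain ⟨B', hB'⟩ := (B.finite_toSet.add (Set.toFinite (H : Set G))).exists_finset_coe
  have hsum : A' + B' = A + B := by
    rw [← coe_inj, coe_add, hA', hB', add_add_add_comm, coe_add_coe, ← coe_add, hH,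
      ← stabilizer_coe_finset, add_stabilizer_self]
  have hA'_ne : A'.Nonempty := by
    rw [← coe_nonempty, hA']
    exact hA.to_set.add ⟨0, H.zero_mem⟩
  have hB'_ne : B'.Nonempty := by
    rw [← coe_nonempty, hB']
    exact hB.to_set.add ⟨0, H.zero_mem⟩
  rw [← hA', ← hB', Set.ncard_coe_finset, Set.ncard_coe_finset, hH, ← hsum]
  exact card_add_card_le_card_add_add_card_stabilizer hA'_ne hB'_ne

theorem stmt_18_general {A B : Finset G} (hA : A.Nonempty) (hB : B.Nonempty)
    (hexc : #(A - B) ≤ #A + #B - 2) :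
    ¬ (Nat.card (stabilizer G (A - B)) ∣ #A - 1 ∧ Nat.card (stabilizer G (A - B)) ∣ #B - 1) := by
  rintro ⟨hdvdA, hdvdB⟩
  rw [sub_eq_add_neg] at hexc hdvdA hdvdB
  rw [← card_neg B] at hexc hdvdB
  have := finite_stabilizer_finset_s18 (hA.add hB.neg)
  have hkneser := ncard_add_stabilizer_add_ncard_add_stabilizer_le hA hB.neg
  have hsatA := card_sub_one_add_card_le_ncard_add _ hA hdvdA
  have hsatB := card_sub_one_add_card_le_ncard_add _ hB.neg hdvdB
  have hpos : 0 < Nat.card (stabilizer G (A + -B)) := Nat.card_pos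
  lia

theorem fdiff_eq_sub {L : ℕ} (A B : Finset (ZMod L)) : fdiff A B = A - B :=
  rfl

theorem card_stab_eq_card_stabilizer {L : ℕ} [NeZero L] (T : Finset (ZMod L)) :
    #(stab T) = Nat.card (stabilizer (ZMod L) T) := by
  have hcoe : (stab T : Set (ZMod L)) = stabilizer (ZMod L) T := by
    ext h
    simp [stab, ← vadd_eq_add, image_vadd]
  rw [← Set.ncard_coe_finset, hcoe]
  rfl

end

theorem stmt_18 (L : ℕ) [NeZero L] (A B : Finset (ZMod L))
    (hA : A.Nonempty) (hB : B.Nonempty) (hcard : A.card = B.card)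
    (hexc : (fdiff A B).card ≤ A.card + B.card - 2) :
    ¬ (stab (fdiff A B)).card ∣ A.card - 1 := by
  rw [card_stab_eq_card_stabilizer, fdiff_eq_sub]
  exact fun hdvd => stmt_18_general hA hB hexc ⟨hdvd, hcard ▸ hdvd⟩
end
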